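/- arXiv:2307.11716 — 2 statements merged into one kernel-verified Lean document; each statement's English description precedes it below -/
import Mathlib

section
/- Let F be a field and n ≥ 1. Let D be a central simple F-algebra with dim_F D = 4n², and let E ⊆ D be a commutative F-subalgebra with dim_F E = 2 that is étale over F, with nontrivial F-algebra automorphism σ of E, such that D is free as a left E-module. Set D₊ = {x ∈ D : ax = xa for all a ∈ E} and D₋ = {x ∈ D : ax = xσ(a) for all a ∈ E}. Let g, g₊, g₋ ∈ D with g = g₊ + g₋, g₊ ∈ D₊, g₋ ∈ D₋, and suppose g, g₊, g₋ are all invertible in D. Set z = g₊⁻¹g₋ and assume there is a monic separable polynomial δ ∈ F[T] of degree n with δ(0) ≠ 0 and δ(1) ≠ 0 such that the characteristic polynomial of the F-linear endomorphism x ↦ z²x of D equals δ(T)^{4n}. Then: (1) the F-subalgebra L := F[z²] of D generated by z² is isomorphic to F[T]/(δ(T)) as an F-algebra; in particular dim_F L = n and L is an étale F-algebra; (2) the elements of E commute with those of L, the multiplication map E ⊗_F L → D is an injective F-algebra homomorphism, and its image E·L has dimension 2n over F; (3) the F-subalgebra B of D generated by E ∪ g⁻¹Eg equals the F-subalgebra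 generated by E ∪ {z}; dim_F B = 4n; the center of B equals L; B is free of rank 4 as an L-module; and B equals the centralizer {x ∈ D : xy = yx for all y ∈ L} of L in D. -/
open Polynomial TensorProduct

theorem aux_simple_baseChange (F K D : Type*) [Field F] [Field K] [Algebra F K]
    [Ring D] [Algebra F D]
    (hcentral : ∀ d : D, (∀ x : D, d * x = x * d) → ∃ a : F, d = algebraMap F D a)
    (hsimple : IsSimpleRing D) : IsSimpleRing (K ⊗[F] D) := by
  classical
  let bas := Module.Basis.ofVectorSpace F K
  let cd := TensorProduct.equivFinsuppOfBasisLeft (N := D) bas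
  have hL : ∀ (d : D) (x : K ⊗[F] D) i, cd ((1 ⊗ₜ d) * x) i = d * cd x i := by
    intro d x i
    induction x with
    | zero => simp
    | tmul k e => simp [cd]
    | add x y hx hy => simp [mul_add, hx, hy]
  have hR : ∀ (d : D) (x : K ⊗[F] D) i, cd (x * (1 ⊗ₜ d)) i = cd x i * d := by
    intro d x i
    induction x with
    | zero => simp
    | tmul k e => simp [cd]
    | add x y hx hy => simp [add_mul, hx, hy]
  apply IsSimpleRing.of_eq_bot_or_eq_top
  intro I
  by_cases hI : I = ⊥
  · exact Or.inl hI
  right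
  have hex : ∃ m : ℕ, ∃ x ∈ I, x ≠ 0 ∧ (cd x).support.card = m := by
    by_contra! h
    apply hI
    rw [eq_bot_iff]
    intro x hx
    by_contra hx0
    exact h _ x hx hx0 rfl
  obtain ⟨x, hxI, hx0, hxm⟩ := Nat.find_spec hex
  have hmin : ∀ y ∈ I, (cd y).support.card < (cd x).support.card → y = 0 := by
    intro y hy hlt
    by_contra hy0
    exact Nat.find_min hex (hxm ▸ hlt) ⟨y, hy, hy0, rfl⟩
  have hcx : cd x ≠ 0 := by simpa using hx0
  obtain ⟨i0, hi0⟩ := Finsupp.support_nonempty_iff.2 hcx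
  let J : TwoSidedIdeal D := TwoSidedIdeal.mk'
    {d | ∃ y ∈ I, (∀ i, cd x i = 0 → cd y i = 0) ∧ cd y i0 = d}
    ⟨0, I.zero_mem, by simp, by simp⟩
    (by
      rintro a b ⟨y, hy, h1, h2⟩ ⟨y', hy', h1', h2'⟩
      exact ⟨y + y', I.add_mem hy hy', fun i hi => by simp [h1 i hi, h1' i hi], by simp [h2, h2']⟩)
    (by
      rintro a ⟨y, hy, h1, h2⟩
      exact ⟨-y, I.neg_mem hy, fun i hi => by simp [h1 i hi], by simp [h2]⟩)
    (by
      rintro d a ⟨y, hy, h1, h2⟩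
      exact ⟨(1 ⊗ₜ d) * y, I.mul_mem_left _ _ hy, fun i hi => by rw [hL, h1 i hi, mul_zero],
        by rw [hL, h2]⟩)
    (by
      rintro a d ⟨y, hy, h1, h2⟩
      exact ⟨y * (1 ⊗ₜ d), I.mul_mem_right _ _ hy, fun i hi => by rw [hR, h1 i hi, zero_mul],
        by rw [hR, h2]⟩)
  have h1J : (1 : D) ∈ J := by
    refine IsSimpleRing.one_mem_of_ne_zero_mem J (x := cd x i0) (by simpa using hi0) ?_
    simp only [J, TwoSidedIdeal.mem_mk']
    exact ⟨x, hxI, fun i hi => hi, rfl⟩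
  simp only [J, TwoSidedIdeal.mem_mk'] at h1J
  obtain ⟨y, hyI, hyx, hy1⟩ := h1J
  have hcomm : ∀ d : D, (1 ⊗ₜ d) * y - y * (1 ⊗ₜ d) = 0 := by
    intro d
    apply hmin _ (I.sub_mem (I.mul_mem_left _ _ hyI) (I.mul_mem_right _ _ hyI))
    apply Finset.card_lt_card
    rw [Finset.ssubset_iff_of_subset]
    · refine ⟨i0, hi0, ?_⟩
      simp [hL, hR, hy1]
    · intro i hi
      rw [Finsupp.mem_support_iff] at hi ⊢
      intro h
      apply hi
      simp [hL, hR, hyx i h]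
  have hcen : ∀ i, ∃ a : F, cd y i = algebraMap F D a := by
    intro i
    apply hcentral
    intro d
    have := congrArg (fun t => cd t i) (hcomm d)
    simp only [map_sub, Finsupp.sub_apply, hL, hR, map_zero, Finsupp.zero_apply] at this
    exact (sub_eq_zero.1 this).symm
  choose a ha using hcen
  have hy : ∃ k : K, y = k ⊗ₜ (1 : D) := by
    refine ⟨∑ i ∈ (cd y).support, a i • bas i, ?_⟩
    conv_lhs => rw [← cd.symm_apply_apply y]
    simp only [cd, TensorProduct.equivFinsuppOfBasisLeft_symm_apply, Finsupp.sum]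
    rw [TensorProduct.sum_tmul]
    refine Finset.sum_congr rfl fun i _ => ?_
    have := ha i
    simp only [cd] at this
    rw [this, Algebra.algebraMap_eq_smul_one, TensorProduct.tmul_smul, TensorProduct.smul_tmul']
  obtain ⟨k, rfl⟩ := hy
  have hk : k ≠ 0 := by
    rintro rfl
    simp at hy1
  rw [← TwoSidedIdeal.one_mem_iff]
  have := I.mul_mem_left (k⁻¹ ⊗ₜ (1 : D)) _ hyI
  rwa [Algebra.TensorProduct.tmul_mul_tmul, inv_mul_cancel₀ hk, one_mul,
    ← Algebra.TensorProduct.one_def] at this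

/-- splitting over the algebraic closure -/
theorem aux_split (F D : Type*) [Field F] (n : ℕ) [Ring D] [Algebra F D] [Module.Finite F D]
    (hdim : Module.finrank F D = 4 * n ^ 2)
    (hcentral : ∀ d : D, (∀ x : D, d * x = x * d) → ∃ a : F, d = algebraMap F D a)
    (hsimple : IsSimpleRing D) :
    Nonempty ((AlgebraicClosure F ⊗[F] D) ≃ₐ[AlgebraicClosure F]
      Matrix (Fin (2 * n)) (Fin (2 * n)) (AlgebraicClosure F)) := by
  have := aux_simple_baseChange F (AlgebraicClosure F) D hcentral hsimple
  obtain ⟨m, _, ⟨e⟩⟩ := IsSimpleRing.exists_algEquiv_matrix_of_isAlgClosed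
    (AlgebraicClosure F) (AlgebraicClosure F ⊗[F] D)
  have h1 := e.toLinearEquiv.finrank_eq
  rw [Module.finrank_baseChange, hdim, Module.finrank_matrix] at h1
  simp only [Fintype.card_fin, Module.finrank_self, mul_one] at h1
  have : m = 2 * n := by
    have : m ^ 2 = (2 * n) ^ 2 := by rw [mul_pow, sq m, ← h1]; norm_num
    exact Nat.pow_left_injective (n := 2) (by norm_num) this
  subst this
  exact ⟨e⟩

/-- eigenvectors for left multiplication in the split algebra -/
theorem aux_eigen (F D : Type*) [Field F] (N : ℕ) [Ring D] [Algebra F D] [Module.Finite F D]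
    (K : Type*) [Field K] [Algebra F K] (e : (K ⊗[F] D) ≃ₐ[K] Matrix (Fin N) (Fin N) K)
    (w : D) (l : K) (hl : aeval l (LinearMap.mulLeft F w).charpoly = 0) :
    ∃ v : Fin N → K, v ≠ 0 ∧ Matrix.mulVec (e (1 ⊗ₜ w)) v = l • v := by
  have h1 : ((LinearMap.mulLeft F w).baseChange K).charpoly.IsRoot l := by
    rw [LinearMap.charpoly_baseChange, IsRoot, eval_map_algebraMap, hl]
  rw [← Module.End.hasEigenvalue_iff_isRoot_charpoly] at h1
  obtain ⟨t, ht⟩ := h1.exists_hasEigenvector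
  have h2 := ht.apply_eq_smul
  have h3 : (LinearMap.mulLeft F w).baseChange K t = (1 ⊗ₜ w) * t := by
    clear h2 ht
    induction t with
    | zero => simp
    | tmul k e => simp
    | add x y hx hy => simp [mul_add, hx, hy]
  rw [h3] at h2
  have h4 : e (1 ⊗ₜ w) * e t = l • e t := by rw [← map_mul, h2, map_smul]
  have h5 : e t ≠ 0 := by simpa using ht.2
  obtain ⟨j, hj⟩ : ∃ j, (e t).col j ≠ 0 := by
    by_contra! h
    apply h5
    ext i j
    exact congrFun (h j) i
  refine ⟨(e t).col j, hj, ?_⟩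
  ext i
  have := congrFun (congrFun h4 i) j
  simpa [Matrix.mul_apply, Matrix.mulVec, dotProduct] using this

theorem aux_aeval_eig {K V : Type*} [Field K] [AddCommGroup V] [Module K V]
    (W : Module.End K V) (u : V) (l : K) (h : W u = l • u) (q : K[X]) :
    aeval W q u = q.eval l • u := by
  by_cases hu : u = 0
  · simp [hu]
  · exact Module.End.aeval_apply_of_hasEigenvector
      ⟨Module.End.mem_eigenspace_iff.2 h, hu⟩

theorem aux_key {K V : Type*} [Field K] [IsAlgClosed K] [AddCommGroup V] [Module K V]
    [Module.Finite K V] (n : ℕ) (hV : Module.finrank K V = 2 * n)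
    (Z Q : Module.End K V) (a b : K) (hQ : ∀ x, Q (Q x) + a • Q x + b • x = 0)
    (hd : a ^ 2 - 4 * b ≠ 0) (hQZ : ∀ x, Q (Z x) = - a • Z x - Z (Q x))
    (hZ : Function.Injective Z) (s : Finset K) (hs : s.card = n)
    (hev : ∀ l ∈ s, ∃ v : V, v ≠ 0 ∧ Z (Z v) = l • v) :
    (∀ q : K[X], (∀ l ∈ s, q.eval l = 0) → aeval (Z * Z) q = 0) ∧
    ∃ v0 v1 : V, ∀ c : Module.End K V, (∀ x, c (Z (Z x)) = Z (Z (c x))) →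
      c v0 = 0 → c v1 = 0 → c = 0 := by
  classical
  have hQW : ∀ x, Q (Z (Z x)) = Z (Z (Q x)) := by
    intro x
    rw [hQZ, hQZ]
    simp
  have hev2 : ∀ l : s, ∃ v : V, ∃ μ : K, v ≠ 0 ∧ Z (Z v) = (l : K) • v ∧ Q v = μ • v ∧
      μ ^ 2 + a * μ + b = 0 := by
    rintro ⟨l, hl⟩
    obtain ⟨v, hv0, hv⟩ := hev l hl
    obtain ⟨r, hr⟩ : ∃ r : K, r ^ 2 + a * r + b = 0 := by
      obtain ⟨r, hr⟩ := IsAlgClosed.exists_root (X ^ 2 + C a * X + C b : K[X])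
        (by
          have : (X ^ 2 + C a * X + C b : K[X]).degree = 2 := by compute_degree!
          rw [this]; norm_num)
      exact ⟨r, by simpa using hr⟩
    by_cases h : Q v = r • v
    · exact ⟨v, r, hv0, hv, h, hr⟩
    · refine ⟨Q v - r • v, - a - r, sub_ne_zero.2 h, ?_, ?_, ?_⟩
      · simp only [map_sub, map_smul, ← hQW, hv, smul_sub]
        rw [smul_comm]
      · have h1 := hQ v
        have h2 : Q (Q v) = -(a • Q v) - b • v := by
          rw [← sub_eq_zero, ← h1]; abel
        have h3 : b = - r ^ 2 - a * r := by linear_combination hr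
        rw [map_sub, map_smul, h2, h3]
        module
      · linear_combination hr
  choose v μ hv0 hv hvQ hμ using hev2
  have hZv : ∀ l : s, Z (Z (Z (v l))) = (l : K) • Z (v l) := by
    intro l
    rw [hv, map_smul]
  have hμ2 : ∀ l, -a - μ l - μ l ≠ 0 := by
    intro l h
    apply hd
    linear_combination (-4) * hμ l + (- a - 2 * μ l) * h
  have hpw : ∀ (l : s) (x : s → V), (∀ k : s, Z (Z (x k)) = (k : K) • x k) →
      aeval (Z * Z) (Lagrange.basis s id (l : K)) (∑ k, x k) = x l := by
    intro l x hx
    rw [map_sum, Finset.sum_eq_single l]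
    · rw [aux_aeval_eig (Z * Z) (x l) l (hx l)]
      have := Lagrange.eval_basis_self (v := id) (s := s) Function.injective_id.injOn l.2
      rw [id] at this
      rw [this, one_smul]
    · intro k _ hk
      rw [aux_aeval_eig (Z * Z) (x k) k (hx k)]
      have := Lagrange.eval_basis_of_ne (v := id) (s := s) (i := (l : K)) (j := (k : K))
        (fun h => hk (Subtype.ext h.symm)) k.2
      rw [id] at this
      rw [this, zero_smul]
    · simp
  let f : s ⊕ s → V := Sum.elim v (fun l => Z (v l))
  have hind : LinearIndependent K f := by
    rw [Fintype.linearIndependent_iff]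
    intro c hc
    rw [Fintype.sum_sum_type, ← Finset.sum_add_distrib] at hc
    have key : ∀ l : s, c (Sum.inl l) • v l + c (Sum.inr l) • Z (v l) = 0 := by
      intro l
      have := hpw l (fun l => c (Sum.inl l) • v l + c (Sum.inr l) • Z (v l)) (by
        intro k
        simp only [map_add, map_smul, hv, smul_add]
        rw [smul_comm, smul_comm (k : K) (c (Sum.inr k))])
      simp only [f, Sum.elim_inl, Sum.elim_inr] at hc
      rw [hc, map_zero] at this
      exact this.symm
    have key2 : ∀ l : s, c (Sum.inr l) = 0 := by
      intro l
      have h1 := congrArg Q (key l)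
      rw [map_add, map_smul, map_smul, hQZ, hvQ, map_smul, map_zero] at h1
      have h2 : (c (Sum.inr l) * (-a - μ l - μ l)) • Z (v l) = 0 := by
        have h3 : (c (Sum.inr l) * (-a - μ l - μ l)) • Z (v l) =
          (c (Sum.inl l) • μ l • v l + c (Sum.inr l) • (-a • Z (v l) - μ l • Z (v l)))
          - μ l • (c (Sum.inl l) • v l + c (Sum.inr l) • Z (v l)) := by module
        rw [h3, h1, key, smul_zero, sub_zero]
      rcases smul_eq_zero.1 h2 with h | h
      · exact (mul_eq_zero.1 h).resolve_right (hμ2 l)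
      · exact absurd (hZ (h.trans (map_zero Z).symm)) (hv0 l)
    rintro (l | l)
    · have := key l
      rw [key2, zero_smul, add_zero] at this
      exact (smul_eq_zero.1 this).resolve_right (hv0 l)
    · exact key2 l
  have hspan := hind.span_eq_top_of_card_eq_finrank' (by simp [hV, hs]; ring)
  have hext : ∀ c : Module.End K V, (∀ l, c (v l) = 0) → (∀ l, c (Z (v l)) = 0) → c = 0 := by
    intro c h1 h2
    refine LinearMap.ext_on_range hspan ?_
    rintro (l | l)
    · simpa [f] using h1 l
    · simpa [f] using h2 l
  refine ⟨?_, ∑ l, v l, ∑ l, Z (v l), ?_⟩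
  · intro q hq
    apply hext
    · intro l
      rw [aux_aeval_eig (Z * Z) _ l (hv l), hq l l.2, zero_smul]
    · intro l
      rw [aux_aeval_eig (Z * Z) _ l (hZv l), hq l l.2, zero_smul]
  · intro c hc h0 h1
    have hcc : ∀ q : K[X], ∀ x, c (aeval (Z * Z) q x) = aeval (Z * Z) q (c x) := by
      intro q x
      have h3 : Commute c (Z * Z) := LinearMap.ext hc
      have : Commute c (aeval (Z * Z) q) := by
        induction q using Polynomial.induction_on' with
        | add p q hp hq => rw [map_add]; exact hp.add_right hq
        | monomial m r =>
          rw [aeval_monomial]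
          exact (Algebra.commute_algebraMap_right r c).mul_right (h3.pow_right m)
      exact LinearMap.congr_fun this x
    apply hext
    · intro l
      rw [← hpw l v hv, hcc, h0, map_zero]
    · intro l
      rw [← hpw l (fun l => Z (v l)) hZv, hcc, h1, map_zero]

theorem aux_main (F : Type*) [Field F] (n : ℕ)
    (D : Type*) [Ring D] [Algebra F D] [Module.Finite F D]
    (K : Type*) [Field K] [Algebra F K] [IsAlgClosed K]
    (e0 : (K ⊗[F] D) ≃ₐ[K] Matrix (Fin (2 * n)) (Fin (2 * n)) K)
    (hsimple : IsSimpleRing D) (ζ z : D) (a b : F)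
    (hζ : ζ * ζ + a • ζ + b • 1 = 0) (hd : a ^ 2 - 4 * b ≠ 0)
    (hζz : ζ * z = - a • z - z * ζ) (hzu : IsUnit z)
    (δ : F[X]) (hmonic : δ.Monic) (hsep : δ.Separable)
    (hdeg : δ.natDegree = n) (hn : 1 ≤ n)
    (hchar : (LinearMap.mulLeft F (z * z)).charpoly = δ ^ (4 * n)) :
    minpoly F (z * z) = δ ∧
      Module.finrank F (Subalgebra.centralizer F ({z * z} : Set D)) ≤ 4 * n := by
  classical
  let V := Fin (2 * n) → K
  let e : (K ⊗[F] D) ≃ₐ[K] Module.End K V := e0.trans Matrix.toLinAlgEquiv'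
  let ρ : D →ₐ[F] Module.End K V :=
    (e.toAlgHom.restrictScalars F).comp Algebra.TensorProduct.includeRight
  have hρ : ∀ d, ρ d = e (1 ⊗ₜ d) := fun d => rfl
  have hns : Nontrivial (Module.End K V) := by
    have : Nonempty (Fin (2 * n)) := ⟨⟨0, by omega⟩⟩
    infer_instance
  have hinj : Function.Injective ρ := RingHom.injective (ρ : D →+* Module.End K V)
  let s : Finset K := (δ.aroots K).toFinset
  have hscard : s.card = n := by
    have h := Polynomial.card_rootSet_eq_natDegree (K := K) hsep (IsAlgClosed.splits _)
    rw [hdeg] at h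
    rw [← h, ← Fintype.card_coe]
    rfl
  have hsroot : ∀ l ∈ s, aeval l δ = 0 := by
    intro l hl
    simp only [s, Multiset.mem_toFinset] at hl
    exact (Polynomial.mem_aroots.1 hl).2
  have hev : ∀ l ∈ s, ∃ v : V, v ≠ 0 ∧ ρ z (ρ z v) = l • v := by
    intro l hl
    obtain ⟨v, hv0, hv⟩ := aux_eigen F D (2 * n) K e0 (z * z) l (by
      rw [hchar, map_pow, hsroot l hl, zero_pow (by omega)])
    refine ⟨v, hv0, ?_⟩
    rw [← Module.End.mul_apply, ← map_mul, hρ]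
    exact hv
  have hsm : ∀ (r : F) (d : D), ρ (r • d) = algebraMap F K r • ρ d := by
    intro r d
    rw [map_smul, algebraMap_smul]
  obtain ⟨k1, v0, v1, k2⟩ := aux_key (K := K) (V := V) n (by simp [V]) (ρ z) (ρ ζ)
    (algebraMap F K a) (algebraMap F K b)
    (by
      intro x
      have h := congrArg ρ hζ
      rw [map_add, map_add, hsm, hsm, map_mul, map_one, map_zero] at h
      simpa using LinearMap.congr_fun h x)
    (by
      intro h
      apply hd
      apply (algebraMap F K).injective
      rw [map_sub, map_mul, map_pow, map_zero, map_ofNat]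
      exact h)
    (by
      intro x
      have h := congrArg ρ hζz
      rw [map_sub, hsm, map_mul, map_mul] at h
      simpa using LinearMap.congr_fun h x)
    (by
      have h := hzu.map ρ
      exact ((Module.End.isUnit_iff _).1 h).1)
    s hscard hev
  have hδ : aeval (z * z) δ = 0 := by
    apply hinj
    rw [map_zero, ← Polynomial.aeval_algHom_apply, map_mul, ← Polynomial.aeval_map_algebraMap K]
    apply k1
    intro l hl
    rw [eval_map_algebraMap, hsroot l hl]
  refine ⟨?_, ?_⟩
  · have hinteg : IsIntegral F (z * z) := Algebra.IsIntegral.isIntegral _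
    symm
    refine (Polynomial.eq_of_monic_of_dvd_of_natDegree_le (minpoly.monic hinteg) hmonic
      (minpoly.dvd F _ hδ) ?_)
    rw [hdeg, ← hscard]
    have hsub : s ⊆ ((minpoly F (z * z)).aroots K).toFinset := by
      intro l hl
      rw [Multiset.mem_toFinset, Polynomial.mem_aroots]
      refine ⟨minpoly.ne_zero hinteg, ?_⟩
      obtain ⟨v, hv0, hv⟩ := hev l hl
      have h1 := aux_aeval_eig (ρ z * ρ z) v l hv ((minpoly F (z * z)).map (algebraMap F K))
      rw [Polynomial.aeval_map_algebraMap, ← map_mul, Polynomial.aeval_algHom_apply,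
        minpoly.aeval, map_zero, eval_map_algebraMap] at h1
      exact (smul_eq_zero.1 h1.symm).resolve_right hv0
    calc s.card ≤ _ := Finset.card_le_card hsub
      _ ≤ _ := Multiset.toFinset_card_le _
      _ ≤ _ := Polynomial.card_roots' _
      _ = _ := Polynomial.natDegree_map _
  · set C := Subalgebra.centralizer F ({z * z} : Set D)
    let j : K ⊗[F] C →ₗ[K] K ⊗[F] D := C.val.toLinearMap.baseChange K
    have hj : Function.Injective j :=
      Module.Flat.lTensor_preserves_injective_linearMap (M := K) C.val.toLinearMap
        Subtype.val_injective
    have hjc : ∀ t, j t * (1 ⊗ₜ (z * z)) = (1 ⊗ₜ (z * z)) * j t := by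
      intro t
      induction t with
      | zero => simp
      | tmul k c =>
        have h := (Subalgebra.mem_centralizer_iff F).1 c.2 (z * z) rfl
        simp [j, h]
      | add x y hx hy => simp only [map_add, add_mul, mul_add, hx, hy]
    let Φ : K ⊗[F] C →ₗ[K] V × V :=
      ((LinearMap.applyₗ v0).prod (LinearMap.applyₗ v1)) ∘ₗ e.toLinearMap ∘ₗ j
    have hΦ : Function.Injective Φ := by
      rw [injective_iff_map_eq_zero]
      intro t ht
      have h1 : e (j t) v0 = 0 := congrArg Prod.fst ht
      have h2 : e (j t) v1 = 0 := congrArg Prod.snd ht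
      have h3 : e (j t) = 0 := by
        apply k2 _ _ h1 h2
        intro x
        have h := congrArg e (hjc t)
        rw [map_mul, map_mul, ← hρ, map_mul] at h
        exact LinearMap.congr_fun h x
      apply hj
      rw [map_zero]
      exact e.injective (h3.trans (map_zero e).symm)
    have h := LinearMap.finrank_le_finrank_of_injective hΦ
    rw [Module.finrank_baseChange, Module.finrank_prod] at h
    simp only [V, Module.finrank_fin_fun] at h
    omega

theorem aux_E (F R : Type*) [Field F] [Ring R] [Algebra F R]
    (hEdim : Module.finrank F R = 2)
    (ζ : R) (hζ : Algebra.adjoin F {ζ} = ⊤)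
    (p : F[X]) (hpm : p.Monic) (hps : p.Separable) (hpd : p.natDegree = 2) (hp : aeval ζ p = 0)
    (σ : R ≃ₐ[F] R) (hσ : σ ≠ AlgEquiv.refl) :
    ∃ a b : F, ζ * ζ + a • ζ + b • 1 = 0 ∧ a ^ 2 - 4 * b ≠ 0 ∧ σ ζ = - a • 1 - ζ ∧
      ∀ x : R, ∃ α β : F, x = α • 1 + β • ζ := by
  obtain ⟨a, ha⟩ : ∃ a, a = p.coeff 1 := ⟨_, rfl⟩
  obtain ⟨b, hb⟩ : ∃ b, b = p.coeff 0 := ⟨_, rfl⟩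
  have hpe : p = X ^ 2 + C a * X + C b := by
    rw [p.as_sum_range_C_mul_X_pow, hpd]
    have : p.coeff 2 = 1 := by rw [← hpd]; exact hpm
    simp [Finset.sum_range_succ, this, ha, hb]
    ring
  have hq : ζ * ζ + a • ζ + b • 1 = 0 := by
    rw [hpe] at hp
    simpa [pow_two, Algebra.smul_def] using hp
  have hq' : ζ * ζ = - a • ζ - b • 1 := by
    rw [← sub_eq_zero, ← hq]; module
  have hd : a ^ 2 - 4 * b ≠ 0 := by
    intro h
    have h1 : derivative p ^ 2 = p * 4 := by
      have h4 : (C a : F[X]) ^ 2 = 4 * C b := by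
        have : a ^ 2 = 4 * b := by linear_combination h
        rw [← map_pow, this, map_mul, map_ofNat]
      rw [hpe]
      simp only [derivative_add, derivative_X_pow, derivative_mul, derivative_C, derivative_X]
      simp only [map_ofNat, Nat.cast_ofNat]
      simp
      linear_combination h4
    have h2 : IsCoprime p (p * 4) := h1 ▸ (IsCoprime.pow_right hps)
    have h3 : IsUnit p := isCoprime_self.1 h2.of_mul_right_left
    have := natDegree_eq_zero_of_isUnit h3
    omega
  have hsp : ∀ x : R, ∃ α β : F, x = α • 1 + β • ζ := by
    intro x
    have hx : x ∈ Algebra.adjoin F {ζ} := by rw [hζ]; trivial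
    have key : ∀ α β : F, ∃ α' β' : F, x * (α • 1 + β • ζ) = α' • 1 + β' • ζ := by
      induction hx using Algebra.adjoin_induction with
      | mem x hx =>
        rw [Set.mem_singleton_iff] at hx
        subst hx
        intro α β
        refine ⟨- (β * b), α - β * a, ?_⟩
        rw [mul_add, mul_smul_comm, mul_smul_comm, mul_one, hq']
        module
      | algebraMap r =>
        intro α β
        refine ⟨r * α, r * β, ?_⟩
        rw [← Algebra.smul_def]
        module
      | add x y _ _ hx hy =>
        intro α β
        obtain ⟨a1, b1, h1⟩ := hx α β
        obtain ⟨a2, b2, h2⟩ := hy α β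
        refine ⟨a1 + a2, b1 + b2, ?_⟩
        rw [add_mul, h1, h2]
        module
      | mul x y _ _ hx hy =>
        intro α β
        obtain ⟨a1, b1, h1⟩ := hy α β
        obtain ⟨a2, b2, h2⟩ := hx a1 b1
        exact ⟨a2, b2, by rw [mul_assoc, h1, h2]⟩
    obtain ⟨α, β, h⟩ := key 1 0
    exact ⟨α, β, by simpa using h⟩
  have hnt : (1 : R) ≠ 0 := by
    intro h
    have : Subsingleton R := subsingleton_of_zero_eq_one h.symm
    rw [Module.finrank_zero_of_subsingleton] at hEdim
    omega
  have hζs : ∀ r : F, ζ ≠ r • 1 := by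
    intro r hr
    have : Module.finrank F R ≤ 1 := by
      apply finrank_le_one (1 : R)
      intro x
      obtain ⟨α, β, h⟩ := hsp x
      refine ⟨α + β * r, ?_⟩
      rw [h, hr]
      module
    omega
  have hind : ∀ α β : F, α • (1 : R) + β • ζ = 0 → α = 0 ∧ β = 0 := by
    intro α β h
    have hβ : β = 0 := by
      by_contra hβ
      apply hζs (-(β⁻¹ * α))
      have h2 := congrArg (fun t => β⁻¹ • t) h
      simp only [smul_add, smul_smul, inv_mul_cancel₀ hβ, one_smul, smul_zero] at h2
      rw [neg_smul]
      exact eq_neg_of_add_eq_zero_right h2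
    subst hβ
    rw [zero_smul, add_zero] at h
    exact ⟨(smul_eq_zero.1 h).resolve_right hnt, rfl⟩
  refine ⟨a, b, hq, hd, ?_, hsp⟩
  obtain ⟨c, d, hcd⟩ := hsp (σ ζ)
  have hd0 : d ≠ 0 := by
    rintro rfl
    apply hζs c
    apply σ.injective
    rw [hcd]
    simp
  have hσq := congrArg σ hq
  rw [map_add, map_add, map_smul, map_smul, map_mul, map_one, map_zero, hcd] at hσq
  have h1 : (c ^ 2 - b * d ^ 2 + a * c + b) • (1 : R) + (2 * c * d - a * d ^ 2 + a * d) • ζ = 0 := by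
    rw [← hσq]
    have : (c • (1 : R) + d • ζ) * (c • 1 + d • ζ) = (c ^ 2) • (1 : R) + (2 * c * d) • ζ
      + (d ^ 2) • (ζ * ζ) := by
      simp only [mul_add, add_mul, smul_mul_smul_comm, mul_one, one_mul]
      module
    rw [this, hq']
    module
  obtain ⟨e1, e2⟩ := hind _ _ h1
  have e3 : 2 * c - a * d + a = 0 := by
    have : d * (2 * c - a * d + a) = 0 := by linear_combination e2
    exact (mul_eq_zero.1 this).resolve_left hd0
  -- `N = c² - b (1-d)²`
  have hN : c ^ 2 - b * (1 - d) ^ 2 ≠ 0 := by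
    intro hN
    have h3 : (a ^ 2 - 4 * b) * (1 - d) = 0 := by
      linear_combination a * e3 - 2 * e1 + 2 * hN
    have h4 : 1 - d = 0 := (mul_eq_zero.1 h3).resolve_left hd
    have h5 : c = 0 := by
      rw [h4] at hN
      have : c ^ 2 = 0 := by linear_combination hN
      exact pow_eq_zero_iff (two_ne_zero) |>.1 this
    have h6 : d = 1 := by linear_combination -h4
    apply hσ
    ext x
    obtain ⟨α, β, h⟩ := hsp x
    rw [h]
    simp [hcd, h5, h6]
  have hdm : d = -1 := by
    have : (d + 1) * (c ^ 2 - b * (1 - d) ^ 2) = 0 := by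
      linear_combination (d - 1) * e1 + c * e3
    have := (mul_eq_zero.1 this).resolve_right hN
    linear_combination this
  subst hdm
  have hc : c = -a := by
    have h7 : c * (c + a) = 0 := by linear_combination e1
    rcases mul_eq_zero.1 h7 with h | h
    · subst h
      have h8 : 2 * a = 0 := by linear_combination e3
      by_contra hne
      have ha0 : a ≠ 0 := by
        intro h0
        apply hne
        rw [h0, neg_zero]
      have h2 : (2 : F) = 0 := (mul_eq_zero.1 h8).resolve_right ha0
      apply hN
      linear_combination (-2 * b) * h2
    · linear_combination h
  rw [hcd, hc]
  module

theorem aux_inv_mem {F D : Type*} [Field F] [Ring D] [Algebra F D] [Module.Finite F D]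
    (S : Subalgebra F D) (u v : D) (hu : u ∈ S) (hvu : v * u = 1) : v ∈ S := by
  let f : S →ₗ[F] S := LinearMap.mulLeft F (⟨u, hu⟩ : S)
  have hf : Function.Injective f := by
    rw [injective_iff_map_eq_zero]
    intro x hx
    have h1 : u * (x : D) = 0 := congrArg Subtype.val hx
    have h2 : v * (u * (x : D)) = 0 := by rw [h1, mul_zero]
    rw [← mul_assoc, hvu, one_mul] at h2
    exact Subtype.ext h2
  obtain ⟨x, hx⟩ := (LinearMap.injective_iff_surjective.1 hf) 1
  have h1 : u * (x : D) = 1 := congrArg Subtype.val hx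
  have : v = x := by
    calc v = v * (u * x) := by rw [h1, mul_one]
      _ = x := by rw [← mul_assoc, hvu, one_mul]
  rw [this]
  exact x.2

theorem aux_struct {F D : Type*} [Field F] [Ring D] [Algebra F D]
    (ζ z : D) (a b : F)
    (hζ : ζ * ζ + a • ζ + b • 1 = 0) (hd : a ^ 2 - 4 * b ≠ 0)
    (hζz : ζ * z = - a • z - z * ζ) (hzu : IsUnit z) :
    (∀ x ∈ Algebra.adjoin F {z * z}, ζ * x = x * ζ) ∧
    (∀ x ∈ Algebra.adjoin F {z * z}, z * x = x * z) ∧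
    (∀ x ∈ Algebra.adjoin F {z * z}, ∀ y ∈ Algebra.adjoin F {z * z},
      z * (x + y * ζ) = (x + y * ζ) * z → y = 0) ∧
    (∀ x1 ∈ Algebra.adjoin F {z * z}, ∀ x2 ∈ Algebra.adjoin F {z * z},
      ∀ x3 ∈ Algebra.adjoin F {z * z}, ∀ x4 ∈ Algebra.adjoin F {z * z},
      ζ * (x1 + x2 * ζ + x3 * z + x4 * (ζ * z)) = (x1 + x2 * ζ + x3 * z + x4 * (ζ * z)) * ζ →
      x3 = 0 ∧ x4 = 0) := by
  have hzζ : z * ζ = - a • z - ζ * z := by rw [hζz]; module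
  have hζζ : ζ * ζ = - a • ζ - b • 1 := by
    rw [← sub_eq_zero, ← hζ]; module
  have hL : ∀ y : D, y * (z * z) = (z * z) * y → ∀ x ∈ Algebra.adjoin F {z * z}, y * x = x * y := by
    intro y hy x hx
    induction hx using Algebra.adjoin_induction with
    | mem x hx => rw [Set.mem_singleton_iff] at hx; subst hx; exact hy
    | algebraMap r => exact (Algebra.commutes r y).symm
    | add x x' _ _ h h' => rw [mul_add, add_mul, h, h']
    | mul x x' _ _ h h' => rw [← mul_assoc, h, mul_assoc, h', mul_assoc]
  have hLζ := hL ζ (by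
    rw [← mul_assoc, hζz, sub_mul, mul_assoc z ζ z, hζz]
    simp only [mul_sub, smul_mul_assoc, mul_smul_comm, mul_assoc]
    module)
  have hLz := hL z (by rw [mul_assoc])
  obtain ⟨θ, hθ⟩ : ∃ θ : D, θ = (2 : F) • ζ + a • 1 := ⟨_, rfl⟩
  have hθθ : θ * θ = (a ^ 2 - 4 * b) • 1 := by
    rw [hθ]
    simp only [mul_add, add_mul, smul_mul_assoc, mul_smul_comm, mul_one, one_mul, hζζ]
    module
  have hcan : ∀ y, θ * y = 0 → y = 0 := by
    intro y hy
    have h : θ * (θ * y) = 0 := by rw [hy, mul_zero]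
    rw [← mul_assoc, hθθ, smul_mul_assoc, one_mul] at h
    exact (smul_eq_zero.1 h).resolve_left hd
  have h0 : ∀ x ∈ Algebra.adjoin F {z * z}, ∀ y ∈ Algebra.adjoin F {z * z},
      z * (x + y * ζ) = (x + y * ζ) * z → y = 0 := by
    intro x hx y hy h
    have h1 : θ * (y * z) = (x + y * ζ) * z - z * (x + y * ζ) := by
      rw [mul_add z, ← mul_assoc z y, hLz x hx, hLz y hy, mul_assoc y z, hzζ, hθ, add_mul,
        smul_mul_assoc, ← mul_assoc ζ, hLζ y hy]
      simp only [add_mul, smul_mul_assoc, mul_smul_comm, mul_assoc, one_mul, mul_sub]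
      module
    rw [h, sub_self] at h1
    exact hzu.mul_left_eq_zero.1 (hcan _ h1)
  refine ⟨hLζ, hLz, h0, ?_⟩
  intro x1 h1 x2 h2 x3 h3 x4 h4 h
  have e1 : θ * ((x3 + x4 * ζ) * z) = ζ * (x1 + x2 * ζ + x3 * z + x4 * (ζ * z)) -
      (x1 + x2 * ζ + x3 * z + x4 * (ζ * z)) * ζ := by
    have m1 : ζ * x1 = x1 * ζ := hLζ x1 h1
    have m2 : ζ * (x2 * ζ) = x2 * (ζ * ζ) := by rw [← mul_assoc, hLζ x2 h2, mul_assoc]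
    have m3 : ζ * (x3 * z) = x3 * (ζ * z) := by rw [← mul_assoc, hLζ x3 h3, mul_assoc]
    have m4 : ζ * (x4 * (ζ * z)) = x4 * (ζ * (ζ * z)) := by rw [← mul_assoc, hLζ x4 h4, mul_assoc]
    have m5 : x3 * z * ζ = - a • (x3 * z) - x3 * (ζ * z) := by
      rw [mul_assoc, hzζ, mul_sub, mul_smul_comm]
    have m6 : x4 * (ζ * z) * ζ = - a • (x4 * (ζ * z)) - x4 * (ζ * (ζ * z)) := by
      rw [mul_assoc, mul_assoc ζ, hzζ, mul_sub, mul_smul_comm, mul_sub, mul_smul_comm]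
    simp only [mul_add, add_mul, m1, m2, m3, m4, m5, m6, hθ, smul_mul_assoc, one_mul]
    rw [mul_assoc x4 ζ z, m4, mul_assoc x2]
    module
  rw [h, sub_self] at e1
  have e2 := hzu.mul_left_eq_zero.1 (hcan _ e1)
  have e3 : x4 = 0 := h0 x3 h3 x4 h4 (by rw [e2, mul_zero, zero_mul])
  refine ⟨?_, e3⟩
  rwa [e3, zero_mul, add_zero] at e2

/-- **Proposition 2.6.** Let `F` be a field, `n ≥ 1`, `D` a central simple `F`-algebra of
dimension `4n²`, `E ⊆ D` a commutative quadratic étale `F`-subalgebra (étale expressed by the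
existence of a generator with a monic separable minimal polynomial of degree 2) with nontrivial
`F`-automorphism `σ`, such that `D` is free as a left `E`-module.  Given `g = g₊ + g₋` with
`g₊ ∈ D₊`, `g₋ ∈ D₋` all invertible, `z = g₊⁻¹ g₋`, and a monic separable `δ` of degree `n` with
`δ(0), δ(1) ≠ 0` such that the characteristic polynomial of left multiplication by `z²` equals
`δ^(4n)`, then (1) `L = F[z²] ≅ F[T]/(δ)` and has dimension `n`; (2) `E` and `L` commute, the
multiplication map `E ⊗ L → D` is an injective algebra homomorphism and `E·L` has `F`-dimension
`2n`; (3) `B = F[E, g⁻¹Eg] = F[E, z]`, `dim_F B = 4n`, the center of `B` is `L`, `B` is free of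
rank 4 over `L` and equals the centralizer of `L` in `D`. -/
theorem statement0
    (F : Type*) [Field F] (n : ℕ) (hn : 1 ≤ n)
    (D : Type*) [Ring D] [Algebra F D] [Module.Finite F D]
    (hdim : Module.finrank F D = 4 * n ^ 2)
    (hcentral : ∀ d : D, (∀ x : D, d * x = x * d) → ∃ a : F, d = algebraMap F D a)
    (hsimple : IsSimpleRing D)
    (E : Subalgebra F D)
    (hEcomm : ∀ x ∈ E, ∀ y ∈ E, x * y = y * x)
    (hEdim : Module.finrank F E = 2)
    (hEetale : ∃ ζ : E, Algebra.adjoin F {ζ} = ⊤ ∧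
      ∃ p : F[X], p.Monic ∧ p.Separable ∧ p.natDegree = 2 ∧ aeval ζ p = 0)
    (σ : E ≃ₐ[F] E) (hσ : σ ≠ AlgEquiv.refl)
    (hfree : ∃ (m : ℕ) (b : Fin m → D),
      ∀ d : D, ∃! c : Fin m → E, d = ∑ i, (c i : D) * b i)
    (g gp gm : D) (hsum : g = gp + gm)
    (hgP : ∀ a : E, (a : D) * gp = gp * (a : D))
    (hgM : ∀ a : E, (a : D) * gm = gm * (σ a : D))
    (hg : IsUnit g) (hgpu : IsUnit gp) (hgmu : IsUnit gm)
    (z : D) (hz : gp * z = gm)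
    (δ : F[X]) (hmonic : δ.Monic) (hsep : δ.Separable)
    (hdeg : δ.natDegree = n) (hδ0 : δ.eval 0 ≠ 0) (hδ1 : δ.eval 1 ≠ 0)
    (hchar : (LinearMap.mulLeft F (z * z)).charpoly = δ ^ (4 * n)) :
    -- (1)  L := F[z²] is isomorphic to F[T]/(δ); in particular dim_F L = n
    (Nonempty (↥(Algebra.adjoin F {z * z}) ≃ₐ[F] (F[X] ⧸ Ideal.span {δ})) ∧
      Module.finrank F ↥(Algebra.adjoin F {z * z}) = n) ∧
    -- (2)  E commutes with L, E ⊗ L → D is an injective algebra map, dim_F (E·L) = 2n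
    ((∀ a ∈ E, ∀ x ∈ Algebra.adjoin F {z * z}, a * x = x * a) ∧
      (∃ φ : (↥E ⊗[F] ↥(Algebra.adjoin F {z * z})) →ₐ[F] D,
        Function.Injective φ ∧
        ∀ (a : E) (x : ↥(Algebra.adjoin F {z * z})), φ (a ⊗ₜ[F] x) = (a : D) * (x : D)) ∧
      Module.finrank F
        ↥(Submodule.span F {t : D | ∃ a ∈ E, ∃ x ∈ Algebra.adjoin F {z * z}, t = a * x})
        = 2 * n) ∧
    -- (3)  B := F[E, g⁻¹Eg] = F[E, z], dim_F B = 4n, Z(B) = L, B free of rank 4 over L,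
    --      and B = Cent_D(L)
    (Algebra.adjoin F ((E : Set D) ∪ {t : D | ∃ a ∈ E, t = ↑hg.unit⁻¹ * (a : D) * g}) =
        Algebra.adjoin F ((E : Set D) ∪ {z}) ∧
      Module.finrank F ↥(Algebra.adjoin F ((E : Set D) ∪ {z})) = 4 * n ∧
      (∀ x ∈ Algebra.adjoin F ((E : Set D) ∪ {z}),
        ((∀ y ∈ Algebra.adjoin F ((E : Set D) ∪ {z}), x * y = y * x) ↔
          x ∈ Algebra.adjoin F {z * z})) ∧
      (∃ b : Fin 4 → D, (∀ i, b i ∈ Algebra.adjoin F ((E : Set D) ∪ {z})) ∧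
        ∀ x ∈ Algebra.adjoin F ((E : Set D) ∪ {z}),
          ∃! c : Fin 4 → ↥(Algebra.adjoin F {z * z}), x = ∑ i, (c i : D) * b i) ∧
      Algebra.adjoin F ((E : Set D) ∪ {z}) =
        Subalgebra.centralizer F ((Algebra.adjoin F {z * z} : Subalgebra F D) : Set D)) := by
  classical
  obtain ⟨ζE, hζtop, p, hpm, hps, hpd, hp0⟩ := hEetale
  obtain ⟨a, b, hqE, hd, hσζ, hspE⟩ := aux_E F E hEdim ζE hζtop p hpm hps hpd hp0 σ hσ
  obtain ⟨ζ, hζdef⟩ : ∃ ζ : D, ζ = (ζE : D) := ⟨_, rfl⟩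
  have hζE : ζ ∈ E := hζdef ▸ ζE.2
  have hEmem : ∀ x ∈ E, ∃ α β : F, x = α • 1 + β • ζ := by
    intro x hx
    obtain ⟨α, β, h⟩ := hspE ⟨x, hx⟩
    refine ⟨α, β, ?_⟩
    have := congrArg Subtype.val h
    simpa [hζdef] using this
  have hζ : ζ * ζ + a • ζ + b • 1 = 0 := by
    have := congrArg Subtype.val hqE
    simpa [hζdef] using this
  have hζζ : ζ * ζ = - a • ζ - b • 1 := by
    rw [← sub_eq_zero, ← hζ]; module
  have hzu : IsUnit z := by
    obtain ⟨u, hu⟩ := hgpu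
    have : z = ↑u⁻¹ * gm := by rw [← hz, ← hu, ← mul_assoc, Units.inv_mul, one_mul]
    rw [this]
    exact (Units.isUnit _).mul hgmu
  have hζz : ζ * z = - a • z - z * ζ := by
    have h1 : gp * (ζ * z) = gp * (z * (σ ζE : D)) := by
      rw [← mul_assoc, hζdef, ← hgP, mul_assoc, hz, hgM, ← mul_assoc, hz]
    have h2 := hgpu.mul_left_cancel h1
    rw [h2, hσζ]
    simp [hζdef, mul_sub]
  have hzζ : z * ζ = - a • z - ζ * z := by rw [hζz]; module
  obtain ⟨e0⟩ := aux_split F D n hdim hcentral hsimple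
  obtain ⟨hmin, hcent⟩ := aux_main F n D (AlgebraicClosure F) e0 hsimple ζ z a b hζ hd hζz hzu δ
    hmonic hsep hdeg hn hchar
  obtain ⟨hLζ, hLz, h0, hA⟩ := aux_struct ζ z a b hζ hd hζz hzu
  -- part (1)
  have hiso : Nonempty (↥(Algebra.adjoin F {z * z}) ≃ₐ[F] (F[X] ⧸ Ideal.span {δ})) := by
    have hker : RingHom.ker (aeval (R := F) (z * z)) = Ideal.span {δ} := by
      rw [← hmin]
      exact minpoly.ker_aeval_eq_span_minpoly F (z * z)
    have e1 := Ideal.quotientKerAlgEquivOfSurjective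
      (aeval (R := F) (z * z)).rangeRestrict_surjective
    have hker2 : RingHom.ker (aeval (R := F) (z * z)).rangeRestrict = Ideal.span {δ} := by
      rw [← hker]
      ext q
      simp only [RingHom.mem_ker]
      rw [← Subtype.coe_inj]
      rfl
    rw [Algebra.adjoin_singleton_eq_range_aeval]
    exact ⟨e1.symm.trans (Ideal.quotientEquivAlgOfEq F hker2)⟩
  have hLdim : Module.finrank F ↥(Algebra.adjoin F {z * z}) = n := by
    obtain ⟨e1⟩ := hiso
    rw [e1.toLinearEquiv.finrank_eq, finrank_quotient_span_eq_natDegree, hdeg]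
  refine ⟨⟨hiso, hLdim⟩, ?_⟩
  clear hiso hmin
  obtain ⟨L, hLdef⟩ : ∃ L, L = Algebra.adjoin F {z * z} := ⟨_, rfl⟩
  rw [← hLdef] at hLζ hLz h0 hA hLdim ⊢
  have hwL : z * z ∈ L := hLdef ▸ Algebra.self_mem_adjoin_singleton F (z * z)
  have hEL : ∀ y ∈ E, ∀ x ∈ L, y * x = x * y := by
    intro y hy x hx
    obtain ⟨α, β, rfl⟩ := hEmem y hy
    simp only [add_mul, mul_add, smul_mul_assoc, mul_smul_comm, one_mul, mul_one, hLζ x hx]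
  have hLL : ∀ y ∈ L, ∀ x ∈ L, y * x = x * y := by
    intro y hy x hx
    subst hLdef
    induction hy using Algebra.adjoin_induction with
    | mem y hy =>
      rw [Set.mem_singleton_iff] at hy; subst hy
      rw [mul_assoc, hLz x hx, ← mul_assoc, hLz x hx, mul_assoc]
    | algebraMap r => exact (Algebra.commutes r x)
    | add y y' _ _ h h' => rw [mul_add, add_mul, h, h']
    | mul y y' _ _ h h' => rw [mul_assoc, h', ← mul_assoc, h, mul_assoc]
  -- part (2)
  refine ⟨⟨hEL, ?_⟩, ?_⟩
  · let Ψ : (L × L) →ₗ[F] D :=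
      L.val.toLinearMap.coprod ((LinearMap.mulRight F ζ) ∘ₗ L.val.toLinearMap)
    have hΨ : ∀ x, Ψ x = (x.1 : D) + (x.2 : D) * ζ := fun x => rfl
    have hΨi : Function.Injective Ψ := by
      rw [injective_iff_map_eq_zero]
      rintro ⟨x, y⟩ h
      rw [hΨ] at h
      simp only at h
      have hy : (y : D) = 0 := h0 x x.2 y y.2 (by rw [h, mul_zero, zero_mul])
      rw [hy, zero_mul, add_zero] at h
      exact Prod.ext (Subtype.ext h) (Subtype.ext hy)
    have hspan : Submodule.span F {t : D | ∃ a ∈ E, ∃ x ∈ L, t = a * x} = LinearMap.range Ψ := by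
      apply le_antisymm
      · rw [Submodule.span_le]
        rintro t ⟨y, hy, x, hx, rfl⟩
        obtain ⟨α, β, rfl⟩ := hEmem y hy
        refine ⟨(α • ⟨x, hx⟩, β • ⟨x, hx⟩), ?_⟩
        rw [hΨ]
        simp [add_mul, hLζ x hx]
      · rintro t ⟨⟨x, y⟩, rfl⟩
        rw [hΨ]
        refine Submodule.add_mem _ (Submodule.subset_span ⟨1, E.one_mem, x, x.2, by simp⟩)
          (Submodule.subset_span ⟨ζ, hζE, y, y.2, by simp [hLζ y y.2]⟩)
    have hfr : Module.finrank F ↥(Submodule.span F {t : D | ∃ a ∈ E, ∃ x ∈ L, t = a * x})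
        = 2 * n := by
      rw [hspan, LinearMap.finrank_range_of_inj hΨi, Module.finrank_prod, hLdim]
      ring
    refine ⟨?_, hfr⟩
    let φ : (↥E ⊗[F] ↥L) →ₐ[F] D := Algebra.TensorProduct.lift E.val L.val
      (fun x y => hEL x x.2 y y.2)
    have hφ : ∀ (a : E) (x : L), φ (a ⊗ₜ[F] x) = (a : D) * (x : D) := by
      intro a x
      exact Algebra.TensorProduct.lift_tmul _ _ _ _ _
    refine ⟨φ, ?_, hφ⟩
    have hr : LinearMap.range φ.toLinearMap =
        Submodule.span F {t : D | ∃ a ∈ E, ∃ x ∈ L, t = a * x} := by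
      apply le_antisymm
      · rintro _ ⟨t, rfl⟩
        induction t with
        | zero => simp
        | tmul y x =>
          exact Submodule.subset_span ⟨y, y.2, x, x.2, hφ y x⟩
        | add x y hx hy => rw [map_add]; exact Submodule.add_mem _ hx hy
      · rw [Submodule.span_le]
        rintro t ⟨y, hy, x, hx, rfl⟩
        exact ⟨(⟨y, hy⟩ : E) ⊗ₜ (⟨x, hx⟩ : L), hφ _ _⟩
    have hrn := LinearMap.finrank_range_add_finrank_ker φ.toLinearMap
    rw [hr, hfr, Module.finrank_tensorProduct, hEdim, hLdim] at hrn
    have hk : Module.finrank F (LinearMap.ker φ.toLinearMap) = 0 := by omega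
    rw [Submodule.finrank_eq_zero] at hk
    exact LinearMap.ker_eq_bot.1 hk
  -- part (3)
  obtain ⟨B, hBdef⟩ : ∃ B, B = Algebra.adjoin F ((E : Set D) ∪ {z}) := ⟨_, rfl⟩
  rw [← hBdef]
  have hEB : ∀ x ∈ E, x ∈ B := fun x hx => hBdef ▸ Algebra.subset_adjoin (Or.inl hx)
  have hzB : z ∈ B := hBdef ▸ Algebra.subset_adjoin (Or.inr rfl)
  have hζB : ζ ∈ B := hEB ζ hζE
  have hLB : ∀ x ∈ L, x ∈ B := by
    have : L ≤ B := by
      rw [hLdef]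
      exact Algebra.adjoin_le (by simpa using B.mul_mem hzB hzB)
    exact this
  let bb : Fin 4 → D := ![1, ζ, z, ζ * z]
  have hbb : ∀ c : Fin 4 → L, ∑ i, (c i : D) * bb i =
      (c 0 : D) + c 1 * ζ + c 2 * z + c 3 * (ζ * z) := by
    intro c
    simp [bb, Fin.sum_univ_four]
  have hbB : ∀ i, bb i ∈ B := by
    intro i
    fin_cases i
    · exact B.one_mem
    · exact hζB
    · exact hzB
    · exact B.mul_mem hζB hzB
  let Ψ : (Fin 4 → L) →ₗ[F] D :=
    { toFun := fun c => ∑ i, (c i : D) * bb i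
      map_add' := by
        intro c d
        simp [add_mul, Finset.sum_add_distrib]
      map_smul' := by
        intro r c
        simp [Finset.smul_sum] }
  have hΨ : ∀ c, Ψ c = ∑ i, (c i : D) * bb i := fun c => rfl
  have hΨi : Function.Injective Ψ := by
    rw [injective_iff_map_eq_zero]
    intro c hc
    rw [hΨ, hbb] at hc
    obtain ⟨h2, h3⟩ := hA _ (c 0).2 _ (c 1).2 _ (c 2).2 _ (c 3).2 (by rw [hc, mul_zero, zero_mul])
    rw [h2, h3, zero_mul, zero_mul, add_zero, add_zero] at hc
    have h1 := h0 _ (c 0).2 _ (c 1).2 (by rw [hc, mul_zero, zero_mul])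
    rw [h1, zero_mul, add_zero] at hc
    funext i
    apply Subtype.ext
    fin_cases i
    · exact hc
    · exact h1
    · exact h2
    · exact h3
  have hBform : ∀ x ∈ B, ∃ c : Fin 4 → L, x = ∑ i, (c i : D) * bb i := by
    intro x hx
    have key : ∀ c : Fin 4 → L, ∃ c' : Fin 4 → L, x * Ψ c = Ψ c' := by
      rw [hBdef] at hx
      induction hx using Algebra.adjoin_induction with
      | mem x hx =>
        intro c
        rcases hx with hx | hx
        · obtain ⟨α, β, rfl⟩ := hEmem x hx
          have hζc : ∃ c' : Fin 4 → L, ζ * Ψ c = Ψ c' := by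
            refine ⟨![- b • c 1, c 0 - a • c 1, - b • c 3, c 2 - a • c 3], ?_⟩
            have m : ∀ x ∈ L, ∀ y, ζ * (x * y) = x * (ζ * y) := by
              intro x hx y
              rw [← mul_assoc, hLζ x hx, mul_assoc]
            have hζζz : ζ * (ζ * z) = - a • (ζ * z) - b • z := by
              rw [← mul_assoc, hζζ, sub_mul, smul_mul_assoc, smul_mul_assoc, one_mul]
            rw [hΨ, hΨ, hbb, hbb]
            simp only [mul_add, m _ (c 1).2, m _ (c 2).2, m _ (c 3).2, hLζ _ (c 0).2, hζζ, hζζz]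
            simp [mul_sub, sub_mul]
            module
          obtain ⟨c', hc'⟩ := hζc
          refine ⟨α • c + β • c', ?_⟩
          rw [add_mul, smul_mul_assoc, smul_mul_assoc, one_mul, hc', map_add, map_smul, map_smul]
        · rw [Set.mem_singleton_iff] at hx
          subst hx
          refine ⟨![⟨x * x, hwL⟩ * (c 2 - a • c 3), - ⟨x * x, hwL⟩ * c 3, c 0 - a • c 1, - c 1], ?_⟩
          have m : ∀ t ∈ L, ∀ y, x * (t * y) = t * (x * y) := by
            intro t ht y
            rw [← mul_assoc, hLz t ht, mul_assoc]
          have hzζz : x * (ζ * x) = - a • (x * x) - (x * x) * ζ := by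
            rw [hζz]
            simp only [mul_sub, mul_smul_comm, mul_assoc]
          rw [hΨ, hΨ, hbb, hbb]
          simp only [mul_add, m _ (c 1).2, m _ (c 2).2, m _ (c 3).2, hLz _ (c 0).2, hzζ, hzζz]
          have n2 := hLL _ hwL _ (c 2).2
          have n3 := hLL _ hwL _ (c 3).2
          simp [mul_sub, sub_mul, n2, n3, mul_assoc]
          module
      | algebraMap r =>
        intro c
        refine ⟨r • c, ?_⟩
        rw [← Algebra.smul_def, map_smul]
      | add x y _ _ hx hy =>
        intro c
        obtain ⟨c1, h1⟩ := hx c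
        obtain ⟨c2, h2⟩ := hy c
        exact ⟨c1 + c2, by rw [add_mul, h1, h2, map_add]⟩
      | mul x y _ _ hx hy =>
        intro c
        obtain ⟨c1, h1⟩ := hy c
        obtain ⟨c2, h2⟩ := hx c1
        exact ⟨c2, by rw [mul_assoc, h1, h2]⟩
    obtain ⟨c', hc'⟩ := key ![1, 0, 0, 0]
    refine ⟨c', ?_⟩
    rw [← hΨ, ← hc', hΨ, hbb]
    simp
  have hrange : LinearMap.range Ψ = Subalgebra.toSubmodule B := by
    apply le_antisymm
    · rintro _ ⟨c, rfl⟩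
      change (∑ i, (c i : D) * bb i) ∈ B
      exact B.sum_mem fun i _ => B.mul_mem (hLB _ (c i).2) (hbB i)
    · intro x hx
      obtain ⟨c, hc⟩ := hBform x hx
      exact ⟨c, hc.symm⟩
  have hBdim : Module.finrank F B = 4 * n := by
    have h1 := LinearMap.finrank_range_of_inj hΨi
    rw [hrange, Module.finrank_pi_fintype] at h1
    simp only [hLdim, Finset.sum_const, Finset.card_univ, Fintype.card_fin, smul_eq_mul] at h1
    exact h1
  have hBcomm : ∀ x ∈ L, ∀ y ∈ B, x * y = y * x := by
    intro x hx y hy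
    rw [hBdef] at hy
    induction hy using Algebra.adjoin_induction with
    | mem y hy =>
      rcases hy with hy | hy
      · exact (hEL y hy x hx).symm
      · rw [Set.mem_singleton_iff] at hy
        subst hy
        exact (hLz x hx).symm
    | algebraMap r => exact (Algebra.commutes r x).symm
    | add y y' _ _ h h' => rw [mul_add, add_mul, h, h']
    | mul y y' _ _ h h' => rw [← mul_assoc, h, mul_assoc, h', mul_assoc]
  refine ⟨?_, hBdim, ?_, ⟨bb, hbB, ?_⟩, ?_⟩
  · -- equality of the two generated subalgebras
    obtain ⟨gi, hgi⟩ : ∃ gi : D, gi = ↑hg.unit⁻¹ := ⟨_, rfl⟩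
    have hggi : g * gi = 1 := by rw [hgi]; exact hg.mul_val_inv
    have hgig : gi * g = 1 := by rw [hgi]; exact hg.val_inv_mul
    rw [← hgi]
    have hg1 : g = gp * (1 + z) := by rw [hsum, mul_add, mul_one, hz]
    obtain ⟨t, ht1, ht2⟩ : ∃ t : D, t * (1 + z) = 1 ∧ (1 + z) * t = 1 := by
      have h1 : gi * gp * (1 + z) = 1 := by rw [mul_assoc, ← hg1, hgig]
      refine ⟨gi * gp, h1, ?_⟩
      apply hgpu.mul_left_cancel
      rw [← mul_assoc, ← hg1, ← mul_assoc, hggi, one_mul, mul_one]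
    have hconj : ∀ y ∈ E, gi * y * g = t * y * (1 + z) := by
      intro y hy
      have h1 : g * (t * y * (1 + z)) = y * g := by
        calc g * (t * y * (1 + z)) = gp * ((1 + z) * t) * y * (1 + z) := by
              rw [hg1]; simp only [mul_assoc]
          _ = gp * y * (1 + z) := by rw [ht2, mul_one]
          _ = y * g := by rw [← hgP ⟨y, hy⟩, mul_assoc, ← hg1]
      rw [mul_assoc, ← h1, ← mul_assoc, hgig, one_mul]
    apply le_antisymm
    · apply Algebra.adjoin_le
      rintro x (hx | ⟨y, hy, rfl⟩)
      · exact hEB x hx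
      · have h1z : 1 + z ∈ B := B.add_mem B.one_mem hzB
        rw [hconj y hy]
        exact B.mul_mem (B.mul_mem (aux_inv_mem B _ t h1z ht1) (hEB y hy)) h1z
    · rw [hBdef]
      set B' := Algebra.adjoin F ((E : Set D) ∪ {t : D | ∃ a ∈ E, t = gi * (a : D) * g}) with hB'
      apply Algebra.adjoin_le
      rintro x (hx | hx)
      · exact Algebra.subset_adjoin (Or.inl hx)
      · rw [Set.mem_singleton_iff] at hx
        subst hx
        have hζB' : ζ ∈ B' := Algebra.subset_adjoin (Or.inl hζE)
        have hsB' : t * ζ * (1 + x) ∈ B' := by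
          rw [← hconj ζ hζE]
          exact Algebra.subset_adjoin (Or.inr ⟨ζ, hζE, rfl⟩)
        have htx : t * x = 1 - t := by
          rw [mul_add, mul_one] at ht1
          rw [← ht1]; abel
        -- `s - ζ = -(1 - t) θ`
        have h1 : t * ζ * (1 + x) - ζ = (t - 1) * ((2 : F) • ζ + a • 1) := by
          have e1 : t * ζ * x = - a • (1 - t) - (1 - t) * ζ := by
            rw [mul_assoc, hζz, mul_sub, mul_smul_comm, htx, ← mul_assoc, htx]
          rw [mul_add, mul_one, e1]
          simp only [mul_add, sub_mul, mul_smul_comm, mul_one, one_mul]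
          module
        have h2 : (t * ζ * (1 + x) - ζ) * ((2 : F) • ζ + a • 1) = (a ^ 2 - 4 * b) • (t - 1) := by
          rw [h1, mul_assoc]
          have : ((2 : F) • ζ + a • 1) * ((2 : F) • ζ + a • 1) = (a ^ 2 - 4 * b) • (1 : D) := by
            simp only [mul_add, add_mul, smul_mul_assoc, mul_smul_comm, mul_one, one_mul, hζζ]
            module
          rw [this, mul_smul_comm, mul_one]
        have h3 : (a ^ 2 - 4 * b) • (t - 1) ∈ B' := by
          rw [← h2]
          exact B'.mul_mem (B'.sub_mem hsB' hζB')
            (B'.add_mem (B'.smul_mem hζB' _) (B'.smul_mem B'.one_mem _))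
        have h4 : t - 1 ∈ B' := by
          have := B'.smul_mem h3 (a ^ 2 - 4 * b)⁻¹
          rwa [smul_smul, inv_mul_cancel₀ hd, one_smul] at this
        have h5 : t ∈ B' := by
          have := B'.add_mem h4 B'.one_mem
          rwa [sub_add_cancel] at this
        have h6 := aux_inv_mem B' t (1 + x) h5 ht2
        have := B'.sub_mem h6 B'.one_mem
        rwa [add_sub_cancel_left] at this
  · intro x hx
    refine ⟨fun h => ?_, fun h y hy => hBcomm x h y hy⟩
    obtain ⟨c, hc⟩ := hBform x hx
    rw [hbb] at hc
    have h1 := h ζ hζB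
    rw [hc] at h1
    obtain ⟨h2, h3⟩ := hA _ (c 0).2 _ (c 1).2 _ (c 2).2 _ (c 3).2 h1.symm
    rw [h2, h3, zero_mul, zero_mul, add_zero, add_zero] at hc
    have h4 := h z hzB
    rw [hc] at h4
    have h5 := h0 _ (c 0).2 _ (c 1).2 h4.symm
    rw [h5, zero_mul, add_zero] at hc
    rw [hc]
    exact (c 0).2
  · intro x hx
    obtain ⟨c, hc⟩ := hBform x hx
    refine ⟨c, hc, fun d hd => hΨi ?_⟩
    rw [hΨ, hΨ, ← hc, ← hd]
  · have hle : B ≤ Subalgebra.centralizer F (L : Set D) := by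
      intro y hy
      rw [Subalgebra.mem_centralizer_iff]
      intro x hx
      exact hBcomm x hx y hy
    have hle2 : Subalgebra.centralizer F (L : Set D) ≤ Subalgebra.centralizer F {z * z} :=
      Subalgebra.centralizer_le F _ _ (by simpa using hwL)
    have h3 : Subalgebra.toSubmodule B = Subalgebra.toSubmodule
        (Subalgebra.centralizer F ({z * z} : Set D)) := by
      apply Submodule.eq_of_le_of_finrank_le (hle.trans hle2)
      exact hcent.trans hBdim.ge
    have h4 : B = Subalgebra.centralizer F {z * z} := Subalgebra.toSubmodule_injective h3
    exact le_antisymm hle (h4 ▸ hle2)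
end

section
/- Let B be a commutative ring, let g ∈ B be a nonzerodivisor, and let (f₁', f₂') be a regular sequence in B. Set f₁ = g·f₁' and f₂ = g·f₂'. Then: (1) the kernel of the B-linear map B² → B, (x, y) ↦ f₁·x + f₂·y, equals the cyclic submodule B·(f₂', −f₁'), and this submodule is free of rank 1 over B; (2) the quotient of this kernel by its submodule B·(f₂, −f₁) is isomorphic to B/(g) as a B-module. -/
theorem statement13_aux {B : Type*} [CommRing B] (g : B) (v w : B × B) (hw : w = g • v)
    (hv : ∀ x : B, x • v = 0 → x = 0) (K : Submodule B (B × B))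
    (hK : K = Submodule.span B {v}) :
    Nonempty ((↥K ⧸ (Submodule.span B {w}).comap K.subtype) ≃ₗ[B] (B ⧸ Ideal.span {g})) := by
  have hvK : v ∈ K := hK ▸ Submodule.mem_span_singleton_self v
  let φ : B →ₗ[B] K := LinearMap.toSpanSingleton B K ⟨v, hvK⟩
  let ψ := ((Submodule.span B {w}).comap K.subtype).mkQ.comp φ
  have hψ : Function.Surjective ψ := by
    refine (Submodule.mkQ_surjective _).comp ?_
    rintro ⟨y, hy⟩
    rw [hK] at hy
    obtain ⟨a, rfl⟩ := Submodule.mem_span_singleton.1 hy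
    exact ⟨a, Subtype.ext rfl⟩
  have hker : LinearMap.ker ψ = Ideal.span {g} := by
    ext x
    have h1 : x ∈ LinearMap.ker ψ ↔ x • v ∈ Submodule.span B {w} := by
      rw [LinearMap.mem_ker]
      exact Submodule.Quotient.mk_eq_zero _
    rw [h1, Submodule.mem_span_singleton, Ideal.mem_span_singleton', hw]
    constructor
    · rintro ⟨a, ha⟩
      refine ⟨a, sub_eq_zero.1 (hv _ ?_)⟩
      rw [sub_smul, mul_smul, ha, sub_self]
    · rintro ⟨a, rfl⟩
      exact ⟨a, (mul_smul _ _ _).symm⟩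
  exact ⟨((Submodule.quotEquivOfEq _ _ hker.symm).trans
    (ψ.quotKerEquivOfSurjective hψ)).symm⟩

/-- **The local computation underlying Proposition 10.2.**  Let `B` be a commutative ring,
`g` a nonzerodivisor, `(f₁', f₂')` a regular sequence in `B`, `f₁ = g·f₁'`, `f₂ = g·f₂'`.
Then (1) the kernel of `B² → B`, `(x,y) ↦ f₁x + f₂y` equals `B·(f₂', −f₁')`, which is free of
rank one; (2) the quotient of this kernel by `B·(f₂, −f₁)` is isomorphic to `B/(g)`. -/
theorem statement13
    (B : Type*) [CommRing B] (g f₁' f₂' : B)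
    (hg : ∀ x : B, g * x = 0 → x = 0)
    (hreg1 : ∀ x : B, f₁' * x = 0 → x = 0)
    (hreg2 : ∀ x : B, f₂' * x ∈ Ideal.span {f₁'} → x ∈ Ideal.span {f₁'}) :
    (LinearMap.ker ((LinearMap.mulLeft B (g * f₁')).coprod (LinearMap.mulLeft B (g * f₂'))) =
        Submodule.span B {((f₂', -f₁') : B × B)} ∧
      Nonempty (↥(Submodule.span B {((f₂', -f₁') : B × B)}) ≃ₗ[B] B)) ∧
    Nonempty
      ((↥(LinearMap.ker
            ((LinearMap.mulLeft B (g * f₁')).coprod (LinearMap.mulLeft B (g * f₂')))) ⧸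
          (Submodule.span B {((g * f₂', -(g * f₁')) : B × B)}).comap
            (LinearMap.ker
              ((LinearMap.mulLeft B (g * f₁')).coprod
                (LinearMap.mulLeft B (g * f₂')))).subtype) ≃ₗ[B]
        (B ⧸ Ideal.span {g})) := by
  have hv : ∀ x : B, x • ((f₂', -f₁') : B × B) = 0 → x = 0 := by
    intro x hx
    have h2 : x * -f₁' = 0 := congrArg Prod.snd hx
    exact hreg1 x (by linear_combination -h2)
  have hK : LinearMap.ker ((LinearMap.mulLeft B (g * f₁')).coprod
      (LinearMap.mulLeft B (g * f₂'))) = Submodule.span B {((f₂', -f₁') : B × B)} := by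
    ext ⟨x, y⟩
    rw [LinearMap.mem_ker, Submodule.mem_span_singleton]
    simp only [LinearMap.coprod_apply, LinearMap.mulLeft_apply, Prod.smul_mk, smul_eq_mul,
      Prod.mk.injEq]
    constructor
    · intro h
      have h1 : f₁' * x + f₂' * y = 0 := hg _ (by linear_combination h)
      obtain ⟨c, hc⟩ := Ideal.mem_span_singleton'.1 (hreg2 y
        (Ideal.mem_span_singleton'.2 ⟨-x, by linear_combination -h1⟩))
      have h3 : x + f₂' * c = 0 := hreg1 _ (by linear_combination h1 + f₂' * hc)
      exact ⟨-c, by linear_combination -h3, by linear_combination hc⟩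
    · rintro ⟨a, rfl, rfl⟩
      ring
  refine ⟨⟨hK, ?_⟩, statement13_aux g _ _ (by simp) hv _ hK⟩
  have hinj : Function.Injective (LinearMap.toSpanSingleton B (B × B) (f₂', -f₁')) :=
    (injective_iff_map_eq_zero _).2 hv
  exact ⟨((LinearEquiv.ofInjective _ hinj).trans
    (LinearEquiv.ofEq _ _ (LinearMap.range_toSpanSingleton _))).symm⟩
end
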